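/- In the uncontrolled setting with an irreducible stochastic matrix P, assume D has nonempty interior. Let y ∈ D_∘ and write y = ∑_{i=1}^d λ_i y^i with λ_i ≥ 0, ∑_i λ_i = 1 (the unique barycentric representation in the extreme points y^i := (C_{d,i} − C_{ℓ,i})_{1≤ℓ≤d} of D_∘), and set E_y := {1 ≤ i ≤ d : λ_i > 0}. Let n_j := (−Q_{j,k})_{1≤k≤d} ∈ ℝ^d denote the negative of the j-th row of Q. Then the outward normal cone of D at y is C(y) = { ∑_{j ∉ E_y} α_j n_j : α_j ≥ 0 } (which is {0} when E_y = {1,…,d}). -/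

import Mathlib

open Matrix

lemma aux_pow_nonneg {n : ℕ} (P : Matrix (Fin (n + 2)) (Fin (n + 2)) ℝ)
    (hP0 : ∀ i j, 0 ≤ P i j) (k : ℕ) : ∀ i j, 0 ≤ (P ^ k) i j := by
  induction k with
  | zero => intro i j; rw [pow_zero, Matrix.one_apply]; split_ifs <;> norm_num
  | succ k ih =>
    intro i j
    rw [pow_succ, Matrix.mul_apply]
    exact Finset.sum_nonneg fun l _ => mul_nonneg (ih i l) (hP0 l j)

lemma aux_pow_mulVec {n : ℕ} (P : Matrix (Fin (n + 2)) (Fin (n + 2)) ℝ)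
    (x : Fin (n + 2) → ℝ) (hx : P *ᵥ x = x) (k : ℕ) : (P ^ k) *ᵥ x = x := by
  induction k with
  | zero => simp
  | succ k ih => rw [pow_succ, ← Matrix.mulVec_mulVec, hx, ih]

lemma aux_pow_vecMul {n : ℕ} (P : Matrix (Fin (n + 2)) (Fin (n + 2)) ℝ)
    (x : Fin (n + 2) → ℝ) (hx : x ᵥ* P = x) (k : ℕ) : x ᵥ* (P ^ k) = x := by
  induction k with
  | zero => simp
  | succ k ih => rw [pow_succ, ← Matrix.vecMul_vecMul, ih, hx]

lemma aux_one {n : ℕ} (P : Matrix (Fin (n + 2)) (Fin (n + 2)) ℝ)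
    (hP1 : ∀ i, ∑ j, P i j = 1) : P *ᵥ (fun _ => 1) = fun _ => 1 := by
  ext i; simp [Matrix.mulVec, dotProduct, hP1]

/-- harmonic vectors are constant -/
lemma aux_const {n : ℕ} (P : Matrix (Fin (n + 2)) (Fin (n + 2)) ℝ)
    (hP0 : ∀ i j, 0 ≤ P i j) (hP1 : ∀ i, ∑ j, P i j = 1)
    (hirr : ∀ i j, ∃ k : ℕ, 1 ≤ k ∧ 0 < (P ^ k) i j)
    (x : Fin (n + 2) → ℝ) (hx : (1 - P) *ᵥ x = 0) : ∀ i j, x i = x j := by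
  have hx' : P *ᵥ x = x := by
    rw [Matrix.sub_mulVec, Matrix.one_mulVec, sub_eq_zero] at hx
    exact hx.symm
  obtain ⟨i, hi⟩ := Finite.exists_max x
  have key : ∀ j, x j = x i := by
    intro j
    obtain ⟨k, -, hk⟩ := hirr i j
    have h1 := congrFun (aux_pow_mulVec P x hx' k) i
    have h2 := congrFun (aux_pow_mulVec P _ (aux_one P hP1) k) i
    simp only [Matrix.mulVec, dotProduct, mul_one] at h1 h2
    have h3 : ∑ l, (P ^ k) i l * (x i - x l) = 0 := by
      simp only [mul_sub, Finset.sum_sub_distrib, h1, ← Finset.sum_mul, h2]; ring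
    have h4 := (Finset.sum_eq_zero_iff_of_nonneg (fun l _ =>
      mul_nonneg (aux_pow_nonneg P hP0 k i l) (sub_nonneg.2 (hi l)))).1 h3 j (Finset.mem_univ _)
    rcases mul_eq_zero.1 h4 with h | h
    · exact absurd h hk.ne'
    · linarith
  intro a b; rw [key a, key b]

/-- positive invariant vector -/
lemma aux_mu {n : ℕ} (P : Matrix (Fin (n + 2)) (Fin (n + 2)) ℝ)
    (hP0 : ∀ i j, 0 ≤ P i j) (hP1 : ∀ i, ∑ j, P i j = 1)
    (hirr : ∀ i j, ∃ k : ℕ, 1 ≤ k ∧ 0 < (P ^ k) i j) :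
    ∃ μ : Fin (n + 2) → ℝ, (∀ i, 0 < μ i) ∧ μ ᵥ* (1 - P) = 0 := by
  have hdet : (1 - P).det = 0 := by
    refine Matrix.exists_mulVec_eq_zero_iff.1 ⟨fun _ => 1, ?_, ?_⟩
    · intro h; simpa using congrFun h 0
    · rw [Matrix.sub_mulVec, Matrix.one_mulVec, aux_one P hP1, sub_self]
  obtain ⟨w, hw0, hw⟩ := Matrix.exists_vecMul_eq_zero_iff.2 hdet
  have hw' : w ᵥ* P = w := by
    rw [Matrix.vecMul_sub, Matrix.vecMul_one, sub_eq_zero] at hw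
    exact hw.symm
  have hle : ∀ j, |w j| ≤ ∑ i, |w i| * P i j := by
    intro j
    have := congrFun hw' j
    simp only [Matrix.vecMul, dotProduct] at this
    rw [← this]
    refine (Finset.abs_sum_le_sum_abs _ _).trans (le_of_eq ?_)
    refine Finset.sum_congr rfl fun i _ => ?_
    rw [abs_mul, abs_of_nonneg (hP0 i j)]
  have hsum : ∑ j, (∑ i, |w i| * P i j - |w j|) = 0 := by
    rw [Finset.sum_sub_distrib, Finset.sum_comm]
    simp [← Finset.mul_sum, hP1]
  have heq := (Finset.sum_eq_zero_iff_of_nonneg (fun j _ => sub_nonneg.2 (hle j))).1 hsum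
  have hinv : (fun i => |w i|) ᵥ* P = fun i => |w i| := by
    ext j
    have := heq j (Finset.mem_univ _)
    simp only [Matrix.vecMul, dotProduct]
    linarith
  refine ⟨fun i => |w i|, ?_, ?_⟩
  · intro j
    obtain ⟨i, hi⟩ := Function.ne_iff.1 hw0
    obtain ⟨k, -, hk⟩ := hirr i j
    have h1 := congrFun (aux_pow_vecMul P _ hinv k) j
    simp only [Matrix.vecMul, dotProduct] at h1
    show 0 < |w j|
    rw [← h1]
    exact Finset.sum_pos' (fun l _ => mul_nonneg (abs_nonneg _) (aux_pow_nonneg P hP0 k l j))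
      ⟨i, Finset.mem_univ _, mul_pos (abs_pos.2 hi) hk⟩
  · rw [Matrix.vecMul_sub, Matrix.vecMul_one, hinv, sub_self]

lemma aux_det {n : ℕ} (P : Matrix (Fin (n + 2)) (Fin (n + 2)) ℝ)
    (hP0 : ∀ i j, 0 ≤ P i j) (hP1 : ∀ i, ∑ j, P i j = 1)
    (hirr : ∀ i j, ∃ k : ℕ, 1 ≤ k ∧ 0 < (P ^ k) i j) (j : Fin (n + 2)) :
    IsUnit ((1 - P).submatrix j.succAbove j.succAbove).det := by
  obtain ⟨μ, hμ, hμQ⟩ := aux_mu P hP0 hP1 hirr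
  rw [isUnit_iff_ne_zero]
  intro h
  obtain ⟨x, hx0, hx⟩ := Matrix.exists_mulVec_eq_zero_iff.2 h
  apply hx0
  set X : Fin (n + 2) → ℝ := j.insertNth 0 x with hX
  have hXj : X j = 0 := by simp [hX]
  have hXs : ∀ l, X (j.succAbove l) = x l := by intro l; simp [hX]
  have h1 : ∀ l, ((1 - P) *ᵥ X) (j.succAbove l) = 0 := by
    intro l
    have := congrFun hx l
    simp only [Matrix.mulVec, dotProduct, Matrix.submatrix_apply, Pi.zero_apply] at this ⊢
    rw [Fin.sum_univ_succAbove _ j, hXj]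
    simp only [hXs, this]; ring
  have h2 : μ ⬝ᵥ ((1 - P) *ᵥ X) = 0 := by
    rw [Matrix.dotProduct_mulVec, hμQ, zero_dotProduct]
  have h3 : ((1 - P) *ᵥ X) j = 0 := by
    rw [dotProduct, Fin.sum_univ_succAbove _ j] at h2
    simp only [h1, mul_zero, Finset.sum_const_zero, add_zero] at h2
    exact (mul_eq_zero.1 h2).resolve_left (hμ j).ne'
  have h4 : (1 - P) *ᵥ X = 0 := by
    ext i
    rcases Fin.eq_self_or_eq_succAbove j i with rfl | ⟨l, rfl⟩
    · exact h3
    · exact h1 l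
  ext l
  rw [← hXs, aux_const P hP0 hP1 hirr X h4 _ j, hXj]; rfl

lemma aux_row {n : ℕ} (P : Matrix (Fin (n + 2)) (Fin (n + 2)) ℝ)
    (hP0 : ∀ i j, 0 ≤ P i j) (hP1 : ∀ i, ∑ j, P i j = 1)
    (hirr : ∀ i j, ∃ k : ℕ, 1 ≤ k ∧ 0 < (P ^ k) i j)
    (v : Fin (n + 2) → ℝ) (hv : ∑ i, v i = 0) :
    ∃ β : Fin (n + 2) → ℝ, β ᵥ* (1 - P) = v := by
  have hdet := aux_det P hP0 hP1 hirr 0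
  set A := (1 - P).submatrix (Fin.succAbove 0) (Fin.succAbove 0) with hA
  set b := (fun l => v (Fin.succAbove 0 l)) ᵥ* A⁻¹ with hb
  have hbA : b ᵥ* A = fun l => v (Fin.succAbove 0 l) := by
    rw [hb, Matrix.vecMul_vecMul, Matrix.nonsing_inv_mul _ hdet, Matrix.vecMul_one]
  refine ⟨(0 : Fin (n + 2)).insertNth (α := fun _ => ℝ) 0 b, ?_⟩
  set B : Fin (n + 2) → ℝ := (0 : Fin (n + 2)).insertNth (α := fun _ => ℝ) 0 b with hB
  have hBj : B 0 = 0 := by simp [hB]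
  have hBs : ∀ l, B (Fin.succAbove 0 l) = b l := by
    intro l; rw [hB]; exact Fin.insertNth_apply_succAbove (α := fun _ => ℝ) _ _ _ _
  have h1 : ∀ l, (B ᵥ* (1 - P)) (Fin.succAbove 0 l) = v (Fin.succAbove 0 l) := by
    intro l
    rw [← congrFun hbA l]
    simp only [Matrix.vecMul, dotProduct]
    rw [Fin.sum_univ_succAbove _ 0, hBj]
    simp only [hBs, hA, Matrix.submatrix_apply]; ring
  have h2 : ∑ k, (B ᵥ* (1 - P)) k = 0 := by
    have : (B ᵥ* (1 - P)) ⬝ᵥ (fun _ => 1) = 0 := by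
      rw [← Matrix.dotProduct_mulVec, Matrix.sub_mulVec, Matrix.one_mulVec, aux_one P hP1,
        sub_self, dotProduct_zero]
    simpa [dotProduct] using this
  ext k
  rcases Fin.eq_self_or_eq_succAbove 0 k with rfl | ⟨l, rfl⟩
  · rw [Fin.sum_univ_succAbove _ 0] at h2 hv
    simp only [h1] at h2
    linarith
  · exact h1 l

/-- Uncontrolled setting with an irreducible stochastic matrix `P`
(`d = n + 2`), cost vector `c̄`, cost matrix `C` and domain `D` with nonempty interior.
Let `y ∈ D_∘`, with (unique) barycentric representation `y = ∑ i, lam i • y^i` in the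
extreme points `y^i = (C_{d,i} − C_{ℓ,i})_ℓ` of `D_∘`, where `lam i ≥ 0` and
`∑ lam = 1`; set `E_y = {i : lam i > 0}` and let `n_j = (−Q_{j,k})_k` be the negative
of the `j`-th row of `Q`.  Then the outward normal cone of `D` at `y` is
`C(y) = { ∑_{j ∉ E_y} α_j n_j : α_j ≥ 0 }`. -/
theorem normal_cone_generated_by_inactive_rows
    (n : ℕ)
    (P : Matrix (Fin (n + 2)) (Fin (n + 2)) ℝ)
    (c : Fin (n + 2) → ℝ)
    (hP0 : ∀ i j, 0 ≤ P i j)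
    (hP1 : ∀ i, ∑ j, P i j = 1)
    (hirr : ∀ i j, ∃ k : ℕ, 1 ≤ k ∧ 0 < (P ^ k) i j)
    (C : Fin (n + 2) → Fin (n + 2) → ℝ)
    (hCdiag : ∀ j, C j j = 0)
    (hCoff : ∀ (j : Fin (n + 2)) (k : Fin (n + 1)),
      C (j.succAbove k) j =
        (((1 - P).submatrix j.succAbove j.succAbove)⁻¹ *ᵥ fun l => c (j.succAbove l)) k)
    (D : Set (Fin (n + 2) → ℝ))
    (hD : D = {x | ∀ i, (∑ j, P i j * x j) - c i ≤ x i})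
    (hint : (interior D).Nonempty)
    (y : Fin (n + 2) → ℝ) (hyD : y ∈ D) (hyd : y (Fin.last (n + 1)) = 0)
    (lam : Fin (n + 2) → ℝ)
    (hlam0 : ∀ i, 0 ≤ lam i) (hlam1 : ∑ i, lam i = 1)
    (hrep : ∀ ℓ, y ℓ = ∑ i, lam i * (C (Fin.last (n + 1)) i - C ℓ i)) :
    {v : Fin (n + 2) → ℝ | ∀ z ∈ D, (∑ i, v i * (z i - y i)) ≤ 0} =
      {v : Fin (n + 2) → ℝ | ∃ α : Fin (n + 2) → ℝ,
        (∀ j, 0 ≤ α j) ∧ (∀ j, 0 < lam j → α j = 0) ∧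
        ∀ k, v k = ∑ j, α j * (-(1 - P) j k)} := by
  obtain ⟨μ, hμ, hμQ⟩ := aux_mu P hP0 hP1 hirr
  have hQ1 : (1 - P) *ᵥ (fun _ => (1 : ℝ)) = 0 := by
    rw [Matrix.sub_mulVec, Matrix.one_mulVec, aux_one P hP1, sub_self]
  -- slack
  set s : (Fin (n + 2) → ℝ) → Fin (n + 2) → ℝ := fun z => (1 - P) *ᵥ z + c with hs
  have hDs : ∀ z, z ∈ D ↔ ∀ i, 0 ≤ s z i := by
    intro z
    rw [hD, Set.mem_setOf_eq]
    refine forall_congr' fun i => ?_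
    have : s z i = z i - ∑ j, P i j * z j + c i := by
      simp only [hs, Matrix.sub_mulVec, Matrix.one_mulVec, Pi.add_apply, Pi.sub_apply]
      rfl
    rw [this]
    constructor <;> intro h <;> linarith
  have hmu : ∀ z, μ ⬝ᵥ s z = μ ⬝ᵥ c := by
    intro z
    simp only [hs]
    rw [dotProduct_add, Matrix.dotProduct_mulVec, hμQ, zero_dotProduct, zero_add]
  have hsdiff : ∀ z w, s z - s w = (1 - P) *ᵥ (z - w) := by
    intro z w
    simp only [hs]
    rw [Matrix.mulVec_sub]; abel
  set m := μ ⬝ᵥ c with hm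
  have hm0 : 0 ≤ m := by
    rw [← hmu y]
    exact Finset.sum_nonneg fun i _ => mul_nonneg (hμ i).le ((hDs y).1 hyD i)
  have hmpos : 0 < m := by
    refine lt_of_le_of_ne hm0 fun hm' => ?_
    have hz : ∀ z ∈ D, s z = 0 := by
      intro z hz
      have h := hmu z
      rw [← hm'] at h
      ext i
      have := (Finset.sum_eq_zero_iff_of_nonneg (fun i _ =>
        mul_nonneg (hμ i).le ((hDs z).1 hz i))).1 h i (Finset.mem_univ _)
      exact (mul_eq_zero.1 this).resolve_left (hμ i).ne'
    obtain ⟨x, hx⟩ := hint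
    have hxD := interior_subset hx
    have hcont : Continuous fun t : ℝ => x + t • (Pi.single 0 1 : Fin (n + 2) → ℝ) := by
      fun_prop
    have hnb : ∀ᶠ t in nhds (0 : ℝ), x + t • (Pi.single 0 1 : Fin (n + 2) → ℝ) ∈ D := by
      apply hcont.continuousAt
      simpa using mem_interior_iff_mem_nhds.1 hx
    obtain ⟨ε, hε, hball⟩ := Metric.eventually_nhds_iff.1 hnb
    have h1 := @hball (ε / 2) (by rw [Real.dist_eq, sub_zero, abs_of_pos (by linarith)]; linarith)
    have h2 := hsdiff (x + (ε / 2) • (Pi.single 0 1 : Fin (n + 2) → ℝ)) x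
    rw [hz _ h1, hz _ hxD, sub_self] at h2
    have h3 := aux_const P hP0 hP1 hirr _ h2.symm 0 1
    simp at h3
    linarith
  -- vertices
  set Y : Fin (n + 2) → Fin (n + 2) → ℝ := fun k l => C (Fin.last (n + 1)) k - C l k with hY
  have hYoff : ∀ k i, i ≠ k → s (Y k) i = 0 := by
    intro k i hik
    rcases Fin.eq_self_or_eq_succAbove k i with rfl | ⟨l, rfl⟩
    · exact absurd rfl hik
    have hY' : Y k = C (Fin.last (n + 1)) k • (fun _ => (1 : ℝ)) - fun l => C l k := by
      ext l; simp [hY]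
    simp only [hs]
    rw [hY', Matrix.mulVec_sub, Matrix.mulVec_smul, hQ1, smul_zero, zero_sub]
    have hdet := aux_det P hP0 hP1 hirr k
    set A := (1 - P).submatrix k.succAbove k.succAbove with hA
    have h1 : ((1 - P) *ᵥ fun l => C l k) (k.succAbove l) = c (k.succAbove l) := by
      have h2 : A *ᵥ (A⁻¹ *ᵥ fun l => c (k.succAbove l)) = fun l => c (k.succAbove l) := by
        rw [Matrix.mulVec_mulVec, Matrix.mul_nonsing_inv _ hdet, Matrix.one_mulVec]
      rw [← congrFun h2 l]
      change ∑ j, (1 - P) (k.succAbove l) j * C j k = ∑ j, A l j * (A⁻¹ *ᵥ fun l => c (k.succAbove l)) j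
      rw [Fin.sum_univ_succAbove _ k, hCdiag, mul_zero, zero_add]
      refine Finset.sum_congr rfl fun j _ => ?_
      rw [hCoff]; rfl
    rw [Pi.add_apply, Pi.neg_apply, h1]; ring
  have hYdiag : ∀ k, μ k * s (Y k) k = m := by
    intro k
    rw [← hmu (Y k), dotProduct]
    symm
    refine Finset.sum_eq_single k (fun i _ hi => ?_) (fun h => absurd (Finset.mem_univ k) h)
    rw [hYoff k i hi, mul_zero]
  have hYD : ∀ k, Y k ∈ D := by
    intro k
    rw [hDs]
    intro i
    by_cases hi : i = k
    · subst hi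
      by_contra h
      have := mul_neg_of_pos_of_neg (hμ i) (not_le.1 h)
      linarith [hYdiag i]
    · rw [hYoff k i hi]
  have hsy : ∀ j, μ j * s y j = lam j * m := by
    intro j
    have hy : y = ∑ i, lam i • Y i := by
      ext l; rw [hrep l]; simp [hY]
    have h1 : s y = ∑ i, lam i • s (Y i) := by
      simp only [hs, smul_add, Finset.sum_add_distrib, ← Finset.sum_smul, hlam1, one_smul]
      rw [hy, Matrix.mulVec_sum]
      simp only [Matrix.mulVec_smul]
    have h2 : s y j = lam j * s (Y j) j := by
      rw [h1, Finset.sum_apply]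
      rw [Finset.sum_eq_single j (fun i _ hi => ?_) (by simp)]
      · simp
      · simp [hYoff i j (Ne.symm hi)]
    rw [h2, ← hYdiag j]; ring
  -- pairing
  have hpair : ∀ (α : Fin (n + 2) → ℝ) z,
      (α ᵥ* (1 - P)) ⬝ᵥ (z - y) = α ⬝ᵥ s z - α ⬝ᵥ s y := by
    intro α z
    rw [← Matrix.dotProduct_mulVec, ← hsdiff, dotProduct_sub]
  ext v
  simp only [Set.mem_setOf_eq]
  constructor
  · intro hv
    have hv1 : ∑ i, v i = 0 := by
      have hsh : ∀ t : ℝ, y + t • (fun _ => (1 : ℝ)) ∈ D := by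
        intro t
        rw [hDs]
        have : s (y + t • (fun _ => (1 : ℝ))) = s y := by
          simp only [hs]; rw [Matrix.mulVec_add, Matrix.mulVec_smul, hQ1, smul_zero, add_zero]
        rw [this]
        exact (hDs y).1 hyD
      have h1 := hv _ (hsh 1)
      have h2 := hv _ (hsh (-1))
      simp at h1 h2
      linarith
    obtain ⟨β, hβ⟩ := aux_row P hP0 hP1 hirr v hv1
    have hβk : ∀ k, m * β k ≤ μ k * (β ⬝ᵥ s y) := by
      intro k
      have h1 : v ⬝ᵥ (Y k - y) ≤ 0 := hv _ (hYD k)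
      rw [← hβ, hpair] at h1
      have h2 : β ⬝ᵥ s (Y k) = β k * s (Y k) k := by
        rw [dotProduct]
        refine Finset.sum_eq_single k (fun i _ hi => ?_) (by simp)
        rw [hYoff k i hi, mul_zero]
      rw [h2] at h1
      have h3 := mul_nonpos_of_nonneg_of_nonpos (hμ k).le h1
      rw [← hYdiag k]; nlinarith
    set t := β ⬝ᵥ s y with ht
    set α : Fin (n + 2) → ℝ := (t / m) • μ - β with hα
    have hα0 : ∀ j, 0 ≤ α j := by
      intro j
      have h1 : α j = (μ j * t - m * β j) / m := by
        simp only [hα, Pi.sub_apply, Pi.smul_apply, smul_eq_mul]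
        field_simp
      rw [h1]
      exact div_nonneg (by linarith [hβk j]) hm0
    have hαs : ∑ j, α j * s y j = 0 := by
      change α ⬝ᵥ s y = 0
      rw [hα, sub_dotProduct, smul_dotProduct, hmu, ← ht, smul_eq_mul, div_mul_cancel₀ _ hmpos.ne',
        sub_self]
    refine ⟨α, hα0, ?_, ?_⟩
    · intro j hj
      have h1 := (Finset.sum_eq_zero_iff_of_nonneg (fun i _ =>
        mul_nonneg (hα0 i) ((hDs y).1 hyD i))).1 hαs j (Finset.mem_univ _)
      refine (mul_eq_zero.1 h1).resolve_right fun h => ?_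
      have h2 := hsy j
      rw [h, mul_zero] at h2
      exact (mul_pos hj hmpos).ne h2
    · intro k
      have h1 : α ᵥ* (1 - P) = -v := by
        rw [hα, Matrix.sub_vecMul, Matrix.smul_vecMul, hμQ, smul_zero, zero_sub, hβ]
      have h2 := congrFun h1 k
      simp only [Matrix.vecMul, dotProduct, Pi.neg_apply] at h2
      simp only [mul_neg, Finset.sum_neg_distrib]
      rw [h2, neg_neg]
  · rintro ⟨α, hα0, hαl, hαv⟩ z hz
    have hv : v = -(α ᵥ* (1 - P)) := by
      ext k
      rw [hαv k]
      simp only [mul_neg, Finset.sum_neg_distrib]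
      rfl
    change v ⬝ᵥ (z - y) ≤ 0
    rw [hv, neg_dotProduct, hpair]
    have h1 : α ⬝ᵥ s y = 0 := by
      refine Finset.sum_eq_zero fun j _ => ?_
      rcases (hlam0 j).lt_or_eq with h | h
      · rw [hαl j h, zero_mul]
      · have := hsy j
        rw [← h, zero_mul] at this
        rw [(mul_eq_zero.1 this).resolve_left (hμ j).ne', mul_zero]
    have h2 : 0 ≤ α ⬝ᵥ s z :=
      Finset.sum_nonneg fun j _ => mul_nonneg (hα0 j) ((hDs z).1 hz j)
    linarith
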